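/- Let n ≥ 1 be an integer, p a prime and k ≥ 1. For any function f : (ℤ/p^kℤ)ⁿ → ℕ that is not identically zero one has ∑_{x ∈ (ℤ/p^kℤ)ⁿ} f(x)ⁿ ≥ C · |ℙ(ℤ/p^kℤ)^{n-1}|^{-1} · ∑_{u ∈ ℙ(ℤ/p^kℤ)^{n-1}} f*(u)ⁿ, where C = 1 / ( 2·⌈log_p(max_u f*(u)) + log_p(n)⌉ )ⁿ. -/

import Mathlib

/-- A vector in `(ℤ/Nℤ)ⁿ` is primitive (for `N = p^k`: some coordinate is a unit). -/
def IsPrimitiveVec {N n : ℕ} (u : Fin n → ZMod N) : Prop :=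
  ∃ v : Fin n → ZMod N, ∑ i, v i * u i = 1

/-- `P` is a fixed set of representatives for the projective space `ℙ(ℤ/Nℤ)^{n-1}`. -/
def IsProjRepSet (N n : ℕ) [NeZero N] (P : Finset (Fin n → ZMod N)) : Prop :=
  (∀ u ∈ P, IsPrimitiveVec u) ∧
  ∀ u : Fin n → ZMod N, IsPrimitiveVec u →
    ∃! w, w ∈ P ∧ ∃ c : (ZMod N)ˣ, u = (c : ZMod N) • w

/-- The maximal function of `f : (ℤ/Nℤ)ⁿ → ℕ` in direction `u`:
the largest sum of `f` over a line in direction `u`. -/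
def fstar {N n : ℕ} [NeZero N] (f : (Fin n → ZMod N) → ℕ) (u : Fin n → ZMod N) : ℕ :=
  Finset.univ.sup fun a : Fin n → ZMod N => ∑ t : ZMod N, f (a + t • u)

open Polynomial in
lemma one_add_pow_sub_ne {p : ℕ} [Fact p.Prime] (d : ℕ) (hd : 0 < d) :
    ((1 + X : (ZMod p)[X]) ^ d - 1) ≠ 0 := by
  intro h
  have h1 : ((1 + X : (ZMod p)[X]) ^ d).natDegree = d := by
    rw [show (1 + X : (ZMod p)[X]) = X + C 1 by simp [add_comm], natDegree_pow, natDegree_X_add_C, mul_one]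
  rw [sub_eq_zero.mp h] at h1
  simp at h1
  omega

open Polynomial in
lemma ntd_bound {p : ℕ} [Fact p.Prime] (L d : ℕ) (hd : 0 < d) (hdL : d < p ^ L) :
    ((1 + X : (ZMod p)[X]) ^ d - 1).natTrailingDegree ≤
      ∑ s ∈ Finset.range L, if p ^ s ∣ d then p ^ s else 0 := by
  have hp : p.Prime := Fact.out
  obtain ⟨s, d', hd', rfl⟩ := Nat.exists_eq_pow_mul_and_not_dvd hd.ne' p hp.ne_one
  have hs : s < L := by
    by_contra h
    push Not at h
    have : p ^ L ≤ p ^ s := Nat.pow_le_pow_right hp.pos h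
    have : p ^ s ≤ p ^ s * d' := Nat.le_mul_of_pos_right _ (Nat.pos_of_ne_zero (by rintro rfl; simp at hd'))
    omega
  have h2 : ((1 + X : (ZMod p)[X]) ^ (p ^ s * d') - 1) = ((1 + X) ^ d' - 1) ^ (p ^ s) := by
    rw [sub_pow_char_pow, one_pow, ← pow_mul, mul_comm]
  have h3 : ((1 + X : (ZMod p)[X]) ^ d' - 1).natTrailingDegree ≤ 1 := by
    apply natTrailingDegree_le_of_ne_zero
    rw [coeff_sub, coeff_one_add_X_pow]
    simp [coeff_one, ZMod.natCast_eq_zero_iff, hd']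
  rw [h2]
  have h4 : (((1 + X : (ZMod p)[X]) ^ d' - 1) ^ (p ^ s)).natTrailingDegree ≤ p ^ s := by
    have hne := one_add_pow_sub_ne (p := p) d' (Nat.pos_of_ne_zero (by rintro rfl; simp at hd'))
    have : ∀ m, (((1 + X : (ZMod p)[X]) ^ d' - 1) ^ m).natTrailingDegree ≤ m := by
      intro m
      induction m with
      | zero => simp
      | succ m ih =>
        rw [pow_succ, natTrailingDegree_mul (pow_ne_zero _ hne) hne]
        omega
    exact this _
  refine h4.trans ?_
  refine le_trans ?_ (Finset.single_le_sum (f := fun t => if p ^ t ∣ p ^ s * d' then p ^ t else 0)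
    (fun _ _ => Nat.zero_le _) (Finset.mem_range.mpr hs))
  simp

lemma sum_pv_bound (p L j : ℕ) :
    ∑ d ∈ Finset.range j, (∑ s ∈ Finset.range L, if p ^ s ∣ (d + 1) then p ^ s else 0) ≤ L * j := by
  rw [Finset.sum_comm]
  calc _ ≤ ∑ s ∈ Finset.range L, j := by
        apply Finset.sum_le_sum
        intro s _
        rw [← Finset.sum_filter, Finset.sum_const, smul_eq_mul]
        have : ((Finset.range j).filter (fun d => p ^ s ∣ d + 1)).card = j / p ^ s := by
          exact Nat.card_multiples j (p ^ s)
        rw [this]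
        exact Nat.div_mul_le_self _ _
    _ = L * j := by simp

open Polynomial in
lemma prod_ntd {p : ℕ} [Fact p.Prime] (L j : ℕ) (hj : j < p ^ L) :
    (∏ l ∈ Finset.range j, ((1 + X : (ZMod p)[X]) ^ j - (1 + X) ^ l)) ≠ 0 ∧
    (∏ l ∈ Finset.range j, ((1 + X : (ZMod p)[X]) ^ j - (1 + X) ^ l)).natTrailingDegree ≤ L * j := by
  have h1X : (1 + X : (ZMod p)[X]) ≠ 0 := by
    rw [show (1 + X : (ZMod p)[X]) = X + C 1 by simp [add_comm]]; exact X_add_C_ne_zero _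
  have h1t : ∀ l, ((1 + X : (ZMod p)[X])^l).natTrailingDegree ≤ 0 := by
    intro l
    apply natTrailingDegree_le_of_ne_zero
    rw [coeff_one_add_X_pow]; simp
  have key : ∀ m ≤ j, (∏ l ∈ Finset.range m, ((1 + X : (ZMod p)[X]) ^ j - (1 + X) ^ (j - 1 - l))) ≠ 0 ∧
    (∏ l ∈ Finset.range m, ((1 + X : (ZMod p)[X]) ^ j - (1 + X) ^ (j - 1 - l))).natTrailingDegree ≤
      ∑ d ∈ Finset.range m, (∑ s ∈ Finset.range L, if p ^ s ∣ (d + 1) then p ^ s else 0) := by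
    intro m
    induction m with
    | zero => simp
    | succ m ih =>
      intro hm
      obtain ⟨i1, i2⟩ := ih (by omega)
      have e : ((1 + X : (ZMod p)[X]) ^ j - (1 + X) ^ (j - 1 - m)) =
          (1 + X) ^ (j - 1 - m) * ((1 + X) ^ (m + 1) - 1) := by
        rw [mul_sub, ← pow_add, mul_one]; congr 2; omega
      have n1 := one_add_pow_sub_ne (p := p) (m + 1) (by omega)
      have n2 := pow_ne_zero (j - 1 - m) h1X
      rw [Finset.prod_range_succ, Finset.sum_range_succ, e]
      refine ⟨mul_ne_zero i1 (mul_ne_zero n2 n1), ?_⟩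
      rw [natTrailingDegree_mul i1 (mul_ne_zero n2 n1), natTrailingDegree_mul n2 n1]
      have := ntd_bound (p := p) L (m + 1) (by omega) (by omega)
      have := h1t (j - 1 - m)
      omega
  have := key j le_rfl
  rw [Finset.prod_range_reflect (fun l => ((1 + X : (ZMod p)[X]) ^ j - (1 + X) ^ l)) j] at this
  exact ⟨this.1, this.2.trans (sum_pv_bound p L j)⟩

/-- lattice points of the simplex -/
def sx (n s : ℕ) : Finset (Fin n → ℕ) :=
  (Fintype.piFinset fun _ => Finset.range s).filter (fun j => ∑ i, j i < s)

lemma mem_sx {n s : ℕ} {j : Fin n → ℕ} : j ∈ sx n s ↔ ∑ i, j i < s := by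
  simp only [sx, Finset.mem_filter, Fintype.mem_piFinset, Finset.mem_range, and_iff_right_iff_imp]
  intro h i
  exact lt_of_le_of_lt (Finset.single_le_sum (f := j) (fun _ _ => Nat.zero_le _) (Finset.mem_univ i)) h

lemma card_sx_succ (n s : ℕ) : (sx (n+1) (s+1)).card = (sx n (s+1)).card + (sx (n+1) s).card := by
  have : sx (n+1) (s+1) = (sx n (s+1)).image (fun j => (Fin.cons 0 j : Fin (n+1) → ℕ)) ∪
      (sx (n+1) s).image (fun j => (Fin.cons (j 0 + 1) (Fin.tail j) : Fin (n+1) → ℕ)) := by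
    ext j
    simp only [Finset.mem_union, Finset.mem_image, mem_sx]
    constructor
    · intro h
      rw [Fin.sum_univ_succ] at h
      rcases Nat.eq_zero_or_pos (j 0) with h0 | h0
      · left
        refine ⟨Fin.tail j, ?_, ?_⟩
        · simp only [Fin.tail]; omega
        · rw [← h0]; exact Fin.cons_self_tail j
      · right
        refine ⟨Fin.cons (j 0 - 1) (Fin.tail j), ?_, ?_⟩
        · rw [Fin.sum_univ_succ]; simp only [Fin.cons_zero, Fin.cons_succ, Fin.tail]; omega
        · simp only [Fin.cons_zero, Fin.tail_cons]
          rw [Nat.sub_add_cancel h0]; exact Fin.cons_self_tail j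
    · rintro (⟨a, ha, rfl⟩ | ⟨a, ha, rfl⟩)
      · rw [Fin.sum_univ_succ]; simpa using ha
      · rw [Fin.sum_univ_succ] at ha ⊢; simp only [Fin.cons_zero, Fin.cons_succ, Fin.tail]; omega
  rw [this, Finset.card_union_of_disjoint, Finset.card_image_of_injective, Finset.card_image_of_injective]
  · intro a b h
    have h0 := congrFun h 0
    simp only [Fin.cons_zero] at h0
    have h1 := congrArg Fin.tail h
    simp only [Fin.tail_cons] at h1
    rw [← Fin.cons_self_tail a, ← Fin.cons_self_tail b, h1, Nat.add_right_cancel h0]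
  · intro a b h
    exact (Fin.cons_injective2 h).2
  · rw [Finset.disjoint_left]
    simp only [Finset.mem_image, not_exists, not_and]
    rintro _ ⟨a, _, rfl⟩ b _ h
    have := congrFun h 0
    simp at this

lemma card_sx (n s : ℕ) : (sx n (s+1)).card = (s + n).choose n := by
  induction n generalizing s with
  | zero => simp [sx]
  | succ n ihn =>
    induction s with
    | zero =>
      rw [card_sx_succ, ihn]
      have : sx (n+1) 0 = ∅ := by ext j; simp [mem_sx]
      simp [this]
    | succ s ihs =>
      rw [card_sx_succ, ihn, ihs, show s + 1 + (n + 1) = (s + n + 1) + 1 by ring, Nat.choose_succ_succ,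
        show s + 1 + n = s + n + 1 by ring, show s + (n+1) = s + n + 1 by ring]

lemma card_sx_lower (n s : ℕ) (hn : 1 ≤ n) : s ^ n ≤ (sx n s).card * n.factorial := by
  rcases s with _ | s
  · simp [zero_pow (by omega : n ≠ 0)]
  · rw [card_sx, mul_comm, ← Nat.ascFactorial_eq_factorial_mul_choose]
    exact Nat.pow_succ_le_ascFactorial _ _

lemma card_sx_upper (n f : ℕ) (hn : 1 ≤ n) : (sx n (n * f)).card * n.factorial ≤ (2 * n * f) ^ n := by
  rcases Nat.eq_zero_or_pos f with rfl | hf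
  · have : sx n (n * 0) = ∅ := by ext j; simp [mem_sx]
    rw [this]; simp
  · obtain ⟨s, hs⟩ : ∃ s, n * f = s + 1 := ⟨n * f - 1, by have := Nat.mul_pos hn hf; omega⟩
    rw [hs, card_sx, mul_comm, ← Nat.ascFactorial_eq_factorial_mul_choose]
    refine (Nat.ascFactorial_le_pow_add _ _).trans ?_
    apply Nat.pow_le_pow_left
    have : n ≤ n * f := Nat.le_mul_of_pos_right _ hf
    rw [mul_assoc, hs]
    omega
open Polynomial in
lemma choose_period {p : ℕ} [Fact p.Prime] (K i e : ℕ) (hi : i < p ^ K) :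
    ((e % p ^ K).choose i : ZMod p) = (e.choose i : ZMod p) := by
  have h : ∀ a b : ℕ, ((a + p ^ K * b).choose i : ZMod p) = (a.choose i : ZMod p) := by
    intro a b
    induction b with
    | zero => simp
    | succ b ih =>
      rw [← ih, ← coeff_one_add_X_pow, ← coeff_one_add_X_pow,
        show a + p ^ K * (b + 1) = (a + p ^ K * b) + p ^ K by ring, pow_add _ _ (p ^ K), add_pow_char_pow,
        one_pow, mul_add, mul_one, coeff_add, coeff_mul_X_pow', if_neg (by omega), add_zero]
  conv_rhs => rw [← Nat.mod_add_div e (p ^ K)]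
  exact (h _ _).symm

/-- row functions -/
def rho (p q n : ℕ) (r : (Fin n → ZMod q) × ℕ) : (Fin n → ZMod q) → ZMod p :=
  fun b => ((∑ i, r.1 i * b i).val.choose r.2 : ZMod p)

lemma rho_eq {p : ℕ} [Fact p.Prime] (K n : ℕ) (v : Fin n → ZMod (p ^ K)) (i : ℕ) (hi : i < p ^ K)
    (b : Fin n → ℕ) :
    rho p (p ^ K) n (v, i) (fun l => (b l : ZMod (p ^ K))) = ((∑ l, (v l).val * b l).choose i : ZMod p) := by
  rw [rho, ← choose_period K i (∑ l, (v l).val * b l) hi]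
  congr 2
  have : NeZero (p ^ K) := ⟨pow_ne_zero _ (Fact.out : p.Prime).ne_zero⟩
  rw [← ZMod.val_natCast]
  congr 1
  push_cast
  simp

/-- pairing of polynomials with functions -/
noncomputable def pairing (p q n : ℕ) :
    MvPolynomial (Fin n) (ZMod p) →ₗ[ZMod p] ((Fin n → ZMod q) → ZMod p) →ₗ[ZMod p] ZMod p :=
  (MvPolynomial.basisMonomials (Fin n) (ZMod p)).constr (ZMod p)
    (fun b => LinearMap.proj (fun i => (b i : ZMod q)))

open Polynomial in
lemma pairing_rho {p : ℕ} [Fact p.Prime] (K n : ℕ) (v : Fin n → ZMod (p ^ K)) (i : ℕ) (hi : i < p ^ K)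
    (G : MvPolynomial (Fin n) (ZMod p)) :
    pairing p (p ^ K) n G (rho p (p ^ K) n (v, i)) =
      (MvPolynomial.aeval (fun l => (1 + X : (ZMod p)[X]) ^ (v l).val) G).coeff i := by
  induction G using MvPolynomial.induction_on' with
  | monomial b a =>
    have : MvPolynomial.monomial b a = a • (MvPolynomial.basisMonomials (Fin n) (ZMod p)) b := by
      simp [MvPolynomial.smul_monomial]
    conv_lhs => rw [this]
    rw [map_smul, LinearMap.smul_apply, pairing, Module.Basis.constr_basis, LinearMap.proj_apply,
      rho_eq K n v i hi, MvPolynomial.aeval_monomial, Finsupp.prod_fintype _ _ (by simp)]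
    simp_rw [← pow_mul]
    rw [Finset.prod_pow_eq_pow_sum, ← Polynomial.C_eq_algebraMap, coeff_C_mul, coeff_one_add_X_pow, smul_eq_mul]
  | add P Q hP hQ => simp only [map_add, LinearMap.add_apply, coeff_add, hP, hQ]

/-- triangular test polynomials -/
noncomputable def testPoly (p m : ℕ) (j : Fin (m+1) → ℕ) : MvPolynomial (Fin (m+1)) (ZMod p) :=
  (MvPolynomial.X 0 - 1) ^ (j 0) *
    ∏ i : Fin m, ∏ l ∈ Finset.range (j i.succ), (MvPolynomial.X i.succ - MvPolynomial.X 0 ^ l)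

open Polynomial in
lemma testPoly_eval {p : ℕ} [Fact p.Prime] (K m : ℕ) (hK : 1 ≤ K) (t : Fin m → ℕ) (ht : ∀ i, t i < p ^ K)
    (j : Fin (m+1) → ℕ) :
    MvPolynomial.aeval (fun l => (1 + X : (ZMod p)[X]) ^
      ((Fin.cons 1 (fun i => (t i : ZMod (p ^ K))) : Fin (m+1) → ZMod (p ^ K)) l).val) (testPoly p m j) =
    X ^ (j 0) * ∏ i : Fin m, ∏ l ∈ Finset.range (j i.succ), ((1 + X) ^ (t i) - (1 + X) ^ l) := by
  have hp : p.Prime := Fact.out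
  have : Fact (1 < p ^ K) := ⟨Nat.one_lt_pow (by omega) hp.one_lt⟩
  simp only [testPoly, map_mul, map_pow, map_sub, map_one, map_prod, MvPolynomial.aeval_X, Fin.cons_zero,
    Fin.cons_succ, ZMod.val_one, pow_one, add_sub_cancel_left]
  congr 1
  apply Finset.prod_congr rfl
  intro i _
  rw [ZMod.val_natCast, Nat.mod_eq_of_lt (ht i)]

open Polynomial in
lemma finrank_lower {p : ℕ} [Fact p.Prime] (m K L M s : ℕ) (hK : 1 ≤ K) (hMq : M ≤ p ^ K)
    (hML : M ≤ p ^ L) (hL : 1 ≤ L) (hs : ∀ x < s, L * x < M) :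
    (sx (m+1) s).card ≤ Module.finrank (ZMod p) (Submodule.span (ZMod p)
      (rho p (p ^ K) (m+1) '' {r | (∃ i, IsUnit (r.1 i)) ∧ r.2 < M})) := by
  have hp : p.Prime := Fact.out
  have : NeZero (p ^ K) := ⟨pow_ne_zero _ hp.ne_zero⟩
  set W := (Submodule.span (ZMod p)
      (rho p (p ^ K) (m+1) '' {r | (∃ i, IsUnit (r.1 i)) ∧ r.2 < M})) with hW
  rw [← Subspace.dual_finrank_eq]
  let Ψ : (sx (m+1) s → ZMod p) →ₗ[ZMod p] Module.Dual (ZMod p) W :=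
    (W.dualRestrict) ∘ₗ (pairing p (p ^ K) (m+1)) ∘ₗ
      (Fintype.linearCombination (ZMod p) (fun j : sx (m+1) s => testPoly p m j.1))
  have hinj : Function.Injective Ψ := by
    rw [← LinearMap.ker_eq_bot, LinearMap.ker_eq_bot']
    intro lam hlam
    set G := (Fintype.linearCombination (ZMod p) (fun j : sx (m+1) s => testPoly p m j.1)) lam with hG
    have hvan : ∀ v : Fin (m+1) → ZMod (p ^ K), (∃ i, IsUnit (v i)) → ∀ i < M,
        (MvPolynomial.aeval (fun l => (1 + X : (ZMod p)[X]) ^ (v l).val) G).coeff i = 0 := by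
      intro v hv i hi
      rw [← pairing_rho K _ v i (by omega)]
      have := LinearMap.congr_fun hlam ⟨rho p (p ^ K) (m+1) (v, i),
        Submodule.subset_span ⟨(v, i), ⟨hv, hi⟩, rfl⟩⟩
      simpa [Ψ] using this
    by_contra hne
    have hex : ∃ j : sx (m+1) s, lam j ≠ 0 := by
      by_contra h
      push Not at h
      exact hne (funext h)
    obtain ⟨j₀, hj₀, hmin⟩ : ∃ j₀ : sx (m+1) s, lam j₀ ≠ 0 ∧ ∀ j : sx (m+1) s, lam j ≠ 0 →
        ∑ i : Fin m, j₀.1 i.succ ≤ ∑ i : Fin m, j.1 i.succ := by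
      obtain ⟨j₀, h1, h2⟩ := Finset.exists_min_image
        (Finset.univ.filter (fun j : sx (m+1) s => lam j ≠ 0)) (fun j => ∑ i : Fin m, j.1 i.succ)
        (by obtain ⟨j, hj⟩ := hex; exact ⟨j, by simpa using hj⟩)
      refine ⟨j₀, by simpa using h1, fun j hj => h2 j (by simpa using hj)⟩
    set t : Fin m → ℕ := fun i => j₀.1 i.succ with ht
    have hsum : ∀ j : sx (m+1) s, L * (j.1 0 + ∑ i : Fin m, j.1 i.succ) < M := by
      intro j
      apply hs
      have := mem_sx.mp j.2
      rwa [Fin.sum_univ_succ] at this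
    have hj₀s := hsum j₀
    have htM : ∀ i, t i < M := by
      intro i
      have h1 : t i ≤ ∑ i : Fin m, j₀.1 i.succ :=
        Finset.single_le_sum (f := t) (fun _ _ => Nat.zero_le _) (Finset.mem_univ i)
      have h2 : (j₀.1 0 + ∑ i : Fin m, j₀.1 i.succ) ≤ L * (j₀.1 0 + ∑ i : Fin m, j₀.1 i.succ) :=
        Nat.le_mul_of_pos_left _ hL
      omega
    have hv := hvan (Fin.cons 1 (fun i => (t i : ZMod (p ^ K)))) ⟨0, by simp⟩
    set A : (ZMod p)[X] := ∏ i : Fin m, ∏ l ∈ Finset.range (t i), ((1 + X) ^ (t i) - (1 + X) ^ l) with hA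
    set H : (ZMod p)[X] := ∑ j : sx (m+1) s, if (∀ i : Fin m, j.1 i.succ = t i) then
      C (lam j) * X ^ (j.1 0) else 0 with hH
    have hGe : MvPolynomial.aeval (fun l => (1 + X : (ZMod p)[X]) ^
      ((Fin.cons 1 (fun i => (t i : ZMod (p ^ K))) : Fin (m+1) → ZMod (p ^ K)) l).val) G = H * A := by
      rw [hG, Fintype.linearCombination_apply, map_sum, hH, Finset.sum_mul]
      apply Finset.sum_congr rfl
      intro j _
      rw [map_smul, testPoly_eval K m hK t (fun i => by have := htM i; omega)]
      split_ifs with hj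
      · rw [smul_eq_C_mul, hA, mul_assoc]
        simp_rw [hj]
      · rw [zero_mul]
        by_cases hl : lam j = 0
        · rw [hl, zero_smul]
        · have : ∃ i, t i < j.1 i.succ := by
            by_contra h
            push Not at h
            apply hj
            have h1 := hmin j hl
            have h2 : ∑ i : Fin m, j.1 i.succ = ∑ i : Fin m, t i :=
              le_antisymm (Finset.sum_le_sum fun i _ => h i) h1
            intro i
            exact (Finset.sum_eq_sum_iff_of_le (fun i _ => h i)).mp h2 i (Finset.mem_univ i)
          obtain ⟨i, hi⟩ := this
          rw [Finset.prod_eq_zero (Finset.mem_univ i), mul_zero, smul_zero]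
          exact Finset.prod_eq_zero (Finset.mem_range.mpr hi) (sub_self _)
    have hcoef : ∀ j : sx (m+1) s, (∀ i : Fin m, j.1 i.succ = t i) → H.coeff (j.1 0) = lam j := by
      intro j hj
      rw [hH, finsetSum_coeff, Finset.sum_eq_single j]
      · rw [if_pos hj]; simp
      · intro j' _ hne
        split_ifs with h'
        · rw [coeff_C_mul, coeff_X_pow, if_neg, mul_zero]
          intro h0
          apply hne
          apply Subtype.ext
          funext i
          refine Fin.cases h0.symm (fun i => ?_) i
          rw [h', hj]
        · simp
      · simp
    have hH0 : H.coeff (j₀.1 0) ≠ 0 := by rw [hcoef j₀ (fun _ => rfl)]; exact hj₀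
    have hHne : H ≠ 0 := by rintro h; rw [h] at hH0; simp at hH0
    have hAall : ∀ S : Finset (Fin m),
        (∏ i ∈ S, ∏ l ∈ Finset.range (t i), ((1 + X : (ZMod p)[X]) ^ (t i) - (1 + X) ^ l)) ≠ 0 ∧
        (∏ i ∈ S, ∏ l ∈ Finset.range (t i), ((1 + X : (ZMod p)[X]) ^ (t i) - (1 + X) ^ l)).natTrailingDegree
          ≤ L * ∑ i ∈ S, t i := by
      classical
      intro S
      induction S using Finset.induction_on with
      | empty => simp
      | insert a S ha ih =>
        have := prod_ntd (p := p) L (t a) (by have := htM a; omega)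
        rw [Finset.prod_insert ha, Finset.sum_insert ha]
        refine ⟨mul_ne_zero this.1 ih.1, ?_⟩
        rw [natTrailingDegree_mul this.1 ih.1, mul_add]
        exact add_le_add this.2 ih.2
    obtain ⟨hA0, hAt⟩ := hAall Finset.univ
    have hlow : M ≤ (H * A).natTrailingDegree := by
      apply le_natTrailingDegree (mul_ne_zero hHne hA0)
      intro i hi
      rw [← hGe]
      exact hv i hi
    rw [natTrailingDegree_mul hHne hA0] at hlow
    have h1 := natTrailingDegree_le_of_ne_zero hH0
    have h2 : L * (j₀.1 0 + ∑ i : Fin m, t i) < M := hj₀s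
    have h3 : j₀.1 0 ≤ L * j₀.1 0 := Nat.le_mul_of_pos_left _ hL
    rw [mul_add] at h2
    have hAt' : A.natTrailingDegree ≤ L * ∑ i : Fin m, t i := hAt
    omega
  have := LinearMap.finrank_le_finrank_of_injective hinj
  simpa using this
open Polynomial in
lemma exists_cyclo {p : ℕ} [Fact p.Prime] (k : ℕ) (hk : 1 ≤ k) :
    ∃ (O : Type) (_ : CommRing O) (_ : IsDomain O) (z : O) (φ : O →+* ZMod p),
      IsPrimitiveRoot z (p ^ k) ∧ φ z = 1 := by
  have hp : p.Prime := Fact.out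
  have hpos : 0 < p ^ k := pow_pos hp.pos k
  have hirr := cyclotomic.irreducible hpos
  have hdom : IsDomain (AdjoinRoot (cyclotomic (p ^ k) ℤ)) := AdjoinRoot.isDomain_of_prime hirr.prime
  have hinj : Function.Injective (AdjoinRoot.of (cyclotomic (p ^ k) ℤ)) :=
    AdjoinRoot.of.injective_of_degree_ne_zero (by
      rw [degree_cyclotomic]
      have := Nat.totient_pos.mpr hpos
      exact_mod_cast this.ne')
  have hchar : CharZero (AdjoinRoot (cyclotomic (p ^ k) ℤ)) := charZero_of_injective_ringHom hinj
  have h0 : eval₂ (Int.castRingHom (ZMod p)) 1 (cyclotomic (p ^ k) ℤ) = 0 := by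
    obtain ⟨j, rfl⟩ : ∃ j, k = j + 1 := ⟨k - 1, by omega⟩
    rw [eval₂_eq_eval_map, map_cyclotomic, eval_one_cyclotomic_prime_pow]
    simp
  refine ⟨AdjoinRoot (cyclotomic (p ^ k) ℤ), inferInstance, hdom, AdjoinRoot.root _,
    AdjoinRoot.lift (Int.castRingHom (ZMod p)) 1 h0, ?_, AdjoinRoot.lift_root _⟩
  have : NeZero ((p ^ k : ℕ) : AdjoinRoot (cyclotomic (p ^ k) ℤ)) := ⟨by exact_mod_cast hpos.ne'⟩
  rw [← isRoot_cyclotomic_iff, IsRoot.def, ← map_cyclotomic (p ^ k) (AdjoinRoot.of (cyclotomic (p ^ k) ℤ)),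
    ← eval₂_eq_eval_map]
  exact AdjoinRoot.eval₂_root _

open Polynomial in
lemma prod_pow_dvd {O ι : Type*} [CommRing O] [IsDomain O] [Fintype ι] (a : ι → O)
    (ha : Function.Injective a) (e : ι → ℕ) (H : O[X]) (h : ∀ t, (X - C (a t)) ^ (e t) ∣ H) :
    ∏ t, (X - C (a t)) ^ (e t) ∣ H := by
  classical
  by_cases hH : H = 0
  · rw [hH]; exact dvd_zero _
  have h1 : ∏ t, (X - C (a t)) ^ (e t) =
      (Multiset.map (fun a => X - C a) (∑ t, Multiset.replicate (e t) (a t))).prod := by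
    rw [← Multiset.coe_mapAddMonoidHom, map_sum, Multiset.prod_sum]
    simp
  rw [h1, Multiset.prod_X_sub_C_dvd_iff_le_roots hH, Multiset.le_iff_count]
  intro y
  rw [Multiset.count_sum']
  simp only [Multiset.count_replicate]
  by_cases hy : ∃ t, a t = y
  · obtain ⟨t, rfl⟩ := hy
    rw [Finset.sum_eq_single t]
    · simp only [if_true, count_roots]
      exact (le_rootMultiplicity_iff hH).mpr (h t)
    · intro b _ hb
      rw [if_neg (fun h => hb (ha h))]
    · simp
  · rw [Finset.sum_eq_zero]
    · exact Nat.zero_le _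
    · intro t _
      rw [if_neg (fun h => hy ⟨t, h⟩)]

open Polynomial in
lemma curve_dvd {O : Type*} [CommRing O] {n : ℕ} (G : MvPolynomial (Fin n) O) (x : Fin n → O) (F : ℕ)
    (hG : ∀ α : Fin n →₀ ℕ, ∑ i, α i < F →
      (MvPolynomial.aeval (fun i => MvPolynomial.X i + MvPolynomial.C (x i)) G :
        MvPolynomial (Fin n) O).coeff α = 0)
    (c : Fin n → O[X]) (z : O) (hc : ∀ i, (X - C z) ∣ c i - C (x i)) :
    (X - C z) ^ F ∣ MvPolynomial.aeval c G := by
  set Q := (MvPolynomial.aeval (fun i => MvPolynomial.X i + MvPolynomial.C (x i)) G :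
        MvPolynomial (Fin n) O) with hQ
  have h1 : MvPolynomial.aeval c G = MvPolynomial.aeval (fun i => c i - C (x i)) Q := by
    rw [hQ, ← AlgHom.comp_apply]
    congr 1
    apply MvPolynomial.algHom_ext
    intro i
    simp
  rw [h1, MvPolynomial.aeval_def, MvPolynomial.eval₂_eq']
  apply Finset.dvd_sum
  intro α _
  by_cases hα : ∑ i, α i < F
  · rw [hG α hα]; simp
  · apply Dvd.dvd.mul_left
    push Not at hα
    refine (pow_dvd_pow _ hα).trans ?_
    rw [← Finset.prod_pow_eq_pow_sum]
    exact Finset.prod_dvd_prod_of_dvd _ _ (fun i _ => pow_dvd_pow_of_dvd (hc i) _)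

open Polynomial in
lemma coeff_taylor_mod {R : Type*} [CommRing R] (e M i : ℕ) (hi : i < M) :
    (taylor 1 ((X ^ e : R[X]) %ₘ (X - C 1) ^ M)).coeff i = (e.choose i : R) := by
  have hm : ((X - C (1:R)) ^ M).Monic := (monic_X_sub_C 1).pow M
  have h := congrArg (fun P => (taylor (1:R) P).coeff i) (modByMonic_add_div (X ^ e : R[X]) ((X - C 1) ^ M))
  simp only [map_add, coeff_add] at h
  rw [taylor_mul, taylor_pow, map_sub, taylor_X, taylor_C, add_sub_cancel_right, coeff_X_pow_mul',
    if_neg (by omega), add_zero] at h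
  rw [h, taylor_pow, taylor_X, add_comm X, map_one, coeff_one_add_X_pow]

lemma exists_right_inv {R m c : Type*} [Field R] [Fintype m] [DecidableEq m] [Fintype c] (M : Matrix m c R)
    (h : LinearIndependent R M.row) : ∃ B : Matrix c m R, M * B = 1 := by
  rw [← Matrix.mulVec_surjective_iff_exists_right_inverse]
  have h1 := h.rank_matrix
  have h2 : LinearMap.range M.mulVecLin = ⊤ := by
    apply Submodule.eq_top_of_finrank_eq
    rw [← Matrix.rank, h1]; simp
  exact LinearMap.range_eq_top.mp h2

open Polynomial in
lemma rows_le_conds {p : ℕ} [Fact p.Prime] (k K n : ℕ) (hk : 1 ≤ k) (hdvd : p ^ k ∣ p ^ K)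
    [NeZero (p ^ k)]
    (F : (Fin n → ZMod (p ^ k)) → ℕ) {ι : Type} [Fintype ι] (R : ι → (Fin n → ZMod (p ^ K)) × ℕ)
    (hB : LinearIndependent (ZMod p) (fun r : ι => rho p (p ^ K) n (R r)))
    (hq : ∀ r, (R r).2 < p ^ K)
    (hline : ∀ r, ∃ a : Fin n → ZMod (p ^ k),
      (R r).2 < ∑ t : ZMod (p ^ k), F (a + t • fun i => ZMod.castHom hdvd (ZMod (p ^ k)) ((R r).1 i))) :
    Fintype.card ι ≤ ∑ x, (sx n (F x)).card := by
  classical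
  have hp : p.Prime := Fact.out
  have : NeZero (p ^ K) := ⟨pow_ne_zero _ hp.ne_zero⟩
  obtain ⟨O, _, _, z, φ, hz, hφ⟩ := exists_cyclo (p := p) k hk
  choose a ha using hline
  have hzval : ∀ m : ℕ, z ^ ((m : ZMod (p ^ k)).val) = z ^ m := by
    intro m
    rw [ZMod.val_natCast, hz.eq_orderOf, pow_mod_orderOf]
  let mon : (Fin n → ZMod (p ^ K)) → MvPolynomial (Fin n) O := fun b => ∏ i, MvPolynomial.X i ^ (b i).val
  let poly : ((Fin n → ZMod (p ^ K)) → O) →ₗ[O] MvPolynomial (Fin n) O := Fintype.linearCombination O mon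
  let A : ((Fin n → ZMod (p ^ K)) → O) →ₗ[O] ((Σ x : Fin n → ZMod (p ^ k), sx n (F x)) → O) :=
    LinearMap.pi (fun s => (MvPolynomial.lcoeff O (Finsupp.equivFunOnFinite.symm s.2.1)) ∘ₗ
      (MvPolynomial.aeval (fun i => MvPolynomial.X i + MvPolynomial.C (z ^ (s.1 i).val)) :
        MvPolynomial (Fin n) O →ₐ[O] MvPolynomial (Fin n) O).toLinearMap ∘ₗ poly)
  let u : ι → Fin n → ZMod (p ^ k) := fun r i => ZMod.castHom hdvd (ZMod (p ^ k)) ((R r).1 i)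
  let h : ι → O[X] := fun r => ∏ t : ZMod (p ^ k), (X - C (z ^ t.val)) ^ F (a r + t • u r)
  let cur : ι → Fin n → O[X] := fun r i => C (z ^ (a r i).val) * X ^ ((R r).1 i).val
  let δ : ι → MvPolynomial (Fin n) O →ₗ[O] O := fun r =>
    (lcoeff O (R r).2) ∘ₗ (taylor 1) ∘ₗ (modByMonicHom (h r)) ∘ₗ (MvPolynomial.aeval (cur r)).toLinearMap
  have hmonic : ∀ r, (h r).Monic := fun r => monic_prod_of_monic _ _ (fun t _ => (monic_X_sub_C _).pow _)
  let D : Matrix ι (Fin n → ZMod (p ^ K)) O := fun r b => δ r (mon b)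
  let Mat : Matrix ι (Fin n → ZMod (p ^ K)) (ZMod p) := fun r b => rho p (p ^ K) n (R r) b
  have hDM : ∀ r b, φ (D r b) = Mat r b := by
    intro r b
    have e1 : (MvPolynomial.aeval (cur r) (mon b)).map φ = X ^ (∑ i, ((R r).1 i).val * (b i).val) := by
      simp only [mon, cur, map_prod, map_pow, MvPolynomial.aeval_X, Polynomial.map_prod, Polynomial.map_pow,
        Polynomial.map_mul, map_C, map_X, hφ, one_pow, map_one, one_mul, ← pow_mul]
      rw [Finset.prod_pow_eq_pow_sum]
    have e2 : (h r).map φ = (X - C 1) ^ (∑ t : ZMod (p ^ k), F (a r + t • u r)) := by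
      simp only [h, Polynomial.map_prod, Polynomial.map_pow, Polynomial.map_sub, map_X, map_C, (map_pow φ), hφ,
        one_pow]
      rw [Finset.prod_pow_eq_pow_sum]
    have e3 : φ (D r b) = (taylor 1 (((MvPolynomial.aeval (cur r) (mon b)).map φ) %ₘ ((h r).map φ))).coeff (R r).2 := by
      rw [← map_modByMonic _ (hmonic r), ← map_one φ, ← map_taylor, coeff_map]
      rfl
    rw [e3, e1, e2, coeff_taylor_mod _ _ _ (ha r)]
    have := rho_eq (p := p) K n (R r).1 (R r).2 (hq r) (fun i => (b i).val)
    rw [← this]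
    simp [Mat]
  obtain ⟨Xi, hXi⟩ := exists_right_inv Mat hB
  choose lift hlift using ZMod.ringHom_surjective φ
  let Y : Matrix (Fin n → ZMod (p ^ K)) ι O := fun b r => lift (Xi b r)
  have hdet : (D * Y).det ≠ 0 := by
    intro h0
    have h1 : (φ.mapMatrix (D * Y)).det = 0 := by rw [← RingHom.map_det, h0, map_zero]
    have h2 : φ.mapMatrix (D * Y) = 1 := by
      rw [← hXi]
      ext r s
      rw [RingHom.mapMatrix_apply, Matrix.map_apply, Matrix.mul_apply, Matrix.mul_apply, map_sum]
      exact Finset.sum_congr rfl (fun b _ => by rw [map_mul, hDM, hlift])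
    rw [h2] at h1
    simp at h1
  have hkill : ∀ c, A c = 0 → D.mulVec c = 0 := by
    intro c hc
    have hδ : ∀ r, δ r (poly c) = 0 := by
      intro r
      have hdv : h r ∣ MvPolynomial.aeval (cur r) (poly c) := by
        apply prod_pow_dvd
        · intro t t' htt
          exact ZMod.val_injective _ (hz.pow_inj (ZMod.val_lt _) (ZMod.val_lt _) htt)
        · intro t
          apply curve_dvd _ (fun i => z ^ ((a r + t • u r) i).val)
          · intro α hα
            have := congrFun hc ⟨a r + t • u r, ⟨⇑α, mem_sx.mpr hα⟩⟩
            simpa [A] using this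
          · intro i
            rw [dvd_iff_isRoot]
            have : ((a r + t • u r) i) = (((a r i).val + t.val * ((R r).1 i).val : ℕ) : ZMod (p ^ k)) := by
              simp [u]
            rw [this, hzval]
            simp [cur, pow_add, pow_mul]
      have : modByMonicHom (h r) (MvPolynomial.aeval (cur r) (poly c)) = 0 :=
        (modByMonic_eq_zero_iff_dvd (hmonic r)).mpr hdv
      simp only [δ, LinearMap.comp_apply, AlgHom.toLinearMap_apply, this, map_zero]
    funext r
    have := hδ r
    simp only [poly, Fintype.linearCombination_apply, map_sum, map_smul] at this
    simp only [Matrix.mulVec, dotProduct, D, Pi.zero_apply]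
    rw [← this]
    exact Finset.sum_congr rfl (fun b _ => by rw [smul_eq_mul, mul_comm])
  have hinj : Function.Injective (A ∘ₗ Y.mulVecLin) := by
    rw [← LinearMap.ker_eq_bot, LinearMap.ker_eq_bot']
    intro c hc
    apply Matrix.eq_zero_of_mulVec_eq_zero hdet
    rw [← Matrix.mulVec_mulVec]
    exact hkill _ hc
  have := card_le_of_injective O _ hinj
  simpa using this
lemma greedy {F V α : Type*} [Field F] [AddCommGroup V] [Module F V] [Finite α]
    (v : α × ℕ → V) (S : α → Prop) (Mx : ℕ) :
    ∃ B : Finset (α × ℕ), LinearIndepOn F v (B : Set (α × ℕ)) ∧ (∀ r ∈ B, S r.1 ∧ r.2 < Mx) ∧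
      ∀ M ≤ Mx, Module.finrank F (Submodule.span F (v '' {r | S r.1 ∧ r.2 < M})) ≤
        (B.filter (fun r => r.2 < M)).card := by
  classical
  induction Mx with
  | zero =>
    refine ⟨∅, by simp, by simp, ?_⟩
    intro M hM
    obtain rfl : M = 0 := by omega
    have : {r : α × ℕ | S r.1 ∧ r.2 < 0} = ∅ := by ext r; simp
    rw [this, Set.image_empty, Submodule.span_empty, finrank_bot]; simp
  | succ Mx ih =>
    obtain ⟨B, hB, hS, hM⟩ := ih
    obtain ⟨b, hbt, hsb, htb, hli⟩ := exists_linearIndepOn_extension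
      (t := {r : α × ℕ | S r.1 ∧ r.2 < Mx + 1}) hB (by
        intro r hr
        have := hS r hr
        exact ⟨this.1, by omega⟩)
    have hfin : b.Finite := by
      apply Set.Finite.subset (s := (Set.univ : Set α) ×ˢ (Set.Iio (Mx + 1)))
      · exact Set.finite_univ.prod (Set.finite_Iio _)
      · intro r hr
        exact ⟨trivial, (hbt hr).2⟩
    refine ⟨hfin.toFinset, by simpa using hli, ?_, ?_⟩
    · intro r hr
      exact hbt (by simpa using hr)
    · intro M hMM
      rcases Nat.lt_or_ge Mx M with h | h
      · obtain rfl : M = Mx + 1 := by omega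
        have h1 : hfin.toFinset.filter (fun r => r.2 < Mx + 1) = hfin.toFinset := by
          apply Finset.filter_true_of_mem
          intro r hr
          exact (hbt (by simpa using hr)).2
        rw [h1]
        have h2 : v '' b = ((hfin.toFinset.image v : Finset V) : Set V) := by simp
        have h3 : Submodule.span F (v '' {r | S r.1 ∧ r.2 < Mx + 1}) ≤
            Submodule.span F ((hfin.toFinset.image v : Finset V) : Set V) := by
          rw [← h2]; exact Submodule.span_le.mpr htb
        have h4 : Module.Finite F (Submodule.span F ((hfin.toFinset.image v : Finset V) : Set V)) :=
          FiniteDimensional.span_finset F _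
        exact (Submodule.finrank_mono h3).trans
          ((finrank_span_finset_le_card _).trans Finset.card_image_le)
      · refine (hM M h).trans (Finset.card_le_card ?_)
        apply Finset.filter_subset_filter
        intro r hr
        simpa using hsb hr

lemma isUnit_iff_red {p : ℕ} [Fact p.Prime] (K : ℕ) (hK : 1 ≤ K) (x : ZMod (p ^ K)) :
    IsUnit x ↔ ZMod.castHom (dvd_pow_self p (by omega : K ≠ 0)) (ZMod p) x ≠ 0 := by
  have hp : p.Prime := Fact.out
  have : NeZero (p ^ K) := ⟨pow_ne_zero _ hp.ne_zero⟩
  obtain ⟨m, rfl⟩ : ∃ m : ℕ, x = m := ⟨x.val, by simp⟩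
  rw [ZMod.isUnit_iff_coprime, map_natCast, Ne, ZMod.natCast_eq_zero_iff,
    Nat.coprime_pow_right_iff (by omega), Nat.coprime_comm, hp.coprime_iff_not_dvd]

lemma prim_iff {p : ℕ} [Fact p.Prime] (K n : ℕ) (hK : 1 ≤ K) (w : Fin n → ZMod (p ^ K)) :
    IsPrimitiveVec w ↔ ∃ i, IsUnit (w i) := by
  constructor
  · rintro ⟨v, hv⟩
    by_contra h
    push Not at h
    have h2 := congrArg (ZMod.castHom (dvd_pow_self p (by omega : K ≠ 0)) (ZMod p)) hv
    rw [map_sum, map_one, Finset.sum_eq_zero] at h2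
    · exact zero_ne_one h2
    · intro i _
      have := h i
      rw [isUnit_iff_red K hK, not_not] at this
      rw [map_mul, this, mul_zero]
  · rintro ⟨i, u, hu⟩
    refine ⟨Pi.single i (↑u⁻¹), ?_⟩
    rw [Finset.sum_eq_single i]
    · rw [← hu]; simp
    · intro j _ hj
      simp [hj]
    · simp

open Matrix in
lemma exists_gl {p : ℕ} [Fact p.Prime] (K n : ℕ) (hK : 1 ≤ K) (v w : Fin n → ZMod (p ^ K))
    (hv : ∃ i, IsUnit (v i)) (hw : ∃ i, IsUnit (w i)) :
    ∃ g : GL (Fin n) (ZMod (p ^ K)), g.1 *ᵥ v = w := by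
  have hp : p.Prime := Fact.out
  have : NeZero (p ^ K) := ⟨pow_ne_zero _ hp.ne_zero⟩
  obtain ⟨χ, h1, h2⟩ : ∃ χ : Fin n → ZMod (p ^ K), IsUnit (χ ⬝ᵥ v) ∧ IsUnit (χ ⬝ᵥ w) := by
    obtain ⟨i, hi⟩ := hv
    obtain ⟨j, hj⟩ := hw
    by_cases hwi : IsUnit (w i)
    · exact ⟨Pi.single i 1, by simpa using hi, by simpa using hwi⟩
    by_cases hvj : IsUnit (v j)
    · exact ⟨Pi.single j 1, by simpa using hvj, by simpa using hj⟩
    refine ⟨Pi.single i 1 + Pi.single j 1, ?_, ?_⟩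
    · rw [isUnit_iff_red K hK] at *
      rw [not_not] at hvj
      simpa [add_dotProduct, -ZMod.castHom_apply, hvj] using hi
    · rw [isUnit_iff_red K hK] at *
      rw [not_not] at hwi
      simpa [add_dotProduct, -ZMod.castHom_apply, hwi] using hj
  obtain ⟨c, hc⟩ := h1
  set ψ : Fin n → ZMod (p ^ K) := (↑c⁻¹ : ZMod (p ^ K)) • χ with hψ
  have e1 : ψ ⬝ᵥ v = 1 := by rw [hψ, smul_dotProduct, ← hc]; simp
  have e2 : IsUnit (ψ ⬝ᵥ w) := by
    rw [hψ, smul_dotProduct, smul_eq_mul]; exact (Units.isUnit _).mul h2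
  set A : Matrix (Fin n) (Fin n) (ZMod (p ^ K)) := 1 + vecMulVec (w - v) ψ with hA
  have hAx : ∀ x, A *ᵥ x = x + (ψ ⬝ᵥ x) • (w - v) := by
    intro x
    rw [hA, add_mulVec, one_mulVec, vecMulVec_mulVec]
    simp
  have hinj : Function.Injective A.mulVec := by
    have : Function.Injective A.mulVecLin := by
      rw [← LinearMap.ker_eq_bot, LinearMap.ker_eq_bot']
      intro x hx
      rw [mulVecLin_apply, hAx] at hx
      have h3 := congrArg (fun y => ψ ⬝ᵥ y) hx
      simp only [dotProduct_add, dotProduct_smul, dotProduct_sub, e1, smul_eq_mul, dotProduct_zero] at h3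
      have h4 : (ψ ⬝ᵥ x) * (ψ ⬝ᵥ w) = 0 := by linear_combination h3
      have h5 : ψ ⬝ᵥ x = 0 := (e2.mul_left_eq_zero).mp h4
      simpa [h5] using hx
    exact this
  have hsurj : Function.Surjective A.mulVec := Finite.surjective_of_injective hinj
  obtain ⟨g, hg⟩ := mulVec_surjective_iff_isUnit.mp hsurj
  refine ⟨g, ?_⟩
  rw [hg, hAx, e1, one_smul]
  abel

lemma fstar_smul {N n : ℕ} [NeZero N] (f : (Fin n → ZMod N) → ℕ) (c : (ZMod N)ˣ) (w : Fin n → ZMod N) :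
    fstar f ((c : ZMod N) • w) = fstar f w := by
  unfold fstar
  congr 1
  funext a
  refine Fintype.sum_equiv (Units.mulRight c) _ _ ?_
  intro t
  simp [mul_smul]

/-- reduction -/
def redv {k K n p : ℕ} (hdvd : p ^ k ∣ p ^ K) (v : Fin n → ZMod (p ^ K)) : Fin n → ZMod (p ^ k) :=
  fun i => ZMod.castHom hdvd (ZMod (p ^ k)) (v i)

open Matrix in
lemma avg_gl {p : ℕ} [Fact p.Prime] (k K n : ℕ) (hk : 1 ≤ k) (hK : 1 ≤ K) (hdvd : p ^ k ∣ p ^ K)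
    [NeZero (p ^ k)] [Fintype (GL (Fin n) (ZMod (p ^ K)))]
    (P : Finset (Fin n → ZMod (p ^ k))) (hP : IsProjRepSet (p ^ k) n P)
    (h : (Fin n → ZMod (p ^ k)) → ℕ) (hinv : ∀ (c : (ZMod (p ^ k))ˣ) w, h ((c : ZMod (p ^ k)) • w) = h w)
    (v : Fin n → ZMod (p ^ K)) (hv : ∃ i, IsUnit (v i)) :
    P.card * ∑ g : GL (Fin n) (ZMod (p ^ K)), h (redv hdvd (g.1 *ᵥ v)) =
      Fintype.card (GL (Fin n) (ZMod (p ^ K))) * ∑ u ∈ P, h u := by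
  classical
  have hp : p.Prime := Fact.out
  have : NeZero (p ^ K) := ⟨pow_ne_zero _ hp.ne_zero⟩
  have hprim : ∀ g : GL (Fin n) (ZMod (p ^ K)), IsPrimitiveVec (redv hdvd (g.1 *ᵥ v)) := by
    intro g
    obtain ⟨v', hv'⟩ := (prim_iff K n hK v).mpr hv
    have e : v' ᵥ* (g⁻¹).1 ⬝ᵥ (g.1 *ᵥ v) = 1 := by
      rw [← dotProduct_mulVec, mulVec_mulVec, ← Units.val_mul, inv_mul_cancel, Units.val_one, one_mulVec]
      exact hv'
    refine ⟨redv hdvd (v' ᵥ* (g⁻¹).1), ?_⟩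
    have := congrArg (ZMod.castHom hdvd (ZMod (p ^ k))) e
    rw [map_one, dotProduct, map_sum] at this
    rw [← this]
    exact Finset.sum_congr rfl (fun i _ => by rw [map_mul]; rfl)
  have hex := fun g => hP.2 _ (hprim g)
  choose W hW huniq using hex
  have hsum : ∑ g : GL (Fin n) (ZMod (p ^ K)), h (redv hdvd (g.1 *ᵥ v)) =
      ∑ w ∈ P, (Finset.univ.filter (fun g => W g = w)).card * h w := by
    rw [← Finset.sum_fiberwise_of_maps_to (s := Finset.univ) (t := P) (g := W) (fun g _ => (hW g).1)]
    apply Finset.sum_congr rfl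
    intro w _
    rw [← smul_eq_mul, ← Finset.sum_const]
    apply Finset.sum_congr rfl
    intro g hg
    obtain ⟨c, hc⟩ := (hW g).2
    rw [hc, hinv, (Finset.mem_filter.mp hg).2]
  have hlift : ∀ w ∈ P, ∃ w' : Fin n → ZMod (p ^ K), (∃ i, IsUnit (w' i)) ∧ redv hdvd w' = w := by
    intro w hw
    obtain ⟨i, hi⟩ := (prim_iff k n hk w).mp (hP.1 w hw)
    have e : redv hdvd (fun i => ((w i).val : ZMod (p ^ K))) = w := by
      funext j
      simp [redv]
    refine ⟨fun i => ((w i).val : ZMod (p ^ K)), ⟨i, ?_⟩, e⟩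
    rw [ZMod.isUnit_iff_coprime, Nat.coprime_pow_right_iff (by omega)]
    have h2 : IsUnit ((((w i).val : ℕ)) : ZMod (p ^ k)) := by simpa using hi
    rwa [ZMod.isUnit_iff_coprime, Nat.coprime_pow_right_iff (by omega)] at h2
  have hle : ∀ w ∈ P, ∀ w' ∈ P, (Finset.univ.filter (fun g => W g = w)).card ≤
      (Finset.univ.filter (fun g => W g = w')).card := by
    intro w hw w' hw'
    obtain ⟨a, ha, har⟩ := hlift w hw
    obtain ⟨b, hb, hbr⟩ := hlift w' hw'
    obtain ⟨T, hT⟩ := exists_gl K n hK a b ha hb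
    apply Finset.card_le_card_of_injOn (fun g => T * g)
    · intro g hg
      simp only [Finset.coe_filter, Finset.mem_univ, true_and, Set.mem_ofPred_eq] at hg ⊢
      symm
      apply huniq
      refine ⟨hw', ?_⟩
      obtain ⟨c, hc⟩ := (hW g).2
      refine ⟨c, ?_⟩
      have hmul : ∀ x, redv hdvd (T.1 *ᵥ x) = (T.1.map (ZMod.castHom hdvd (ZMod (p ^ k)))) *ᵥ (redv hdvd x) := by
        intro x
        funext i
        exact RingHom.map_mulVec _ _ _ _
      rw [Units.val_mul, ← mulVec_mulVec, hmul, hc, hg, mulVec_smul, ← har, ← hmul, hT, hbr]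
    · intro x _ y _ hxy
      exact mul_left_cancel hxy
  have hcard : Fintype.card (GL (Fin n) (ZMod (p ^ K))) =
      ∑ w ∈ P, (Finset.univ.filter (fun g => W g = w)).card := by
    rw [← Finset.card_univ]
    exact Finset.card_eq_sum_card_fiberwise (fun g _ => (hW g).1)
  rcases P.eq_empty_or_nonempty with rfl | ⟨w₀, hw₀⟩
  · simp
  · have hc : ∀ w ∈ P, (Finset.univ.filter (fun g => W g = w)).card =
      (Finset.univ.filter (fun g => W g = w₀)).card :=
      fun w hw => le_antisymm (hle w hw w₀ hw₀) (hle w₀ hw₀ w hw)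
    have e : ∑ w ∈ P, (Finset.univ.filter (fun g => W g = w)).card * h w =
        (Finset.univ.filter (fun g => W g = w₀)).card * ∑ w ∈ P, h w := by
      rw [Finset.mul_sum]
      exact Finset.sum_congr rfl (fun w hw => by rw [hc w hw])
    rw [hsum, hcard, Finset.sum_congr rfl hc, Finset.sum_const, smul_eq_mul, mul_assoc, e]

open Matrix in
lemma rho_gl {p : ℕ} [Fact p.Prime] (K n : ℕ) (g : GL (Fin n) (ZMod (p ^ K))) {ι : Type}
    (R : ι → (Fin n → ZMod (p ^ K)) × ℕ) (h : LinearIndependent (ZMod p) (fun r => rho p (p ^ K) n (R r))) :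
    LinearIndependent (ZMod p) (fun r => rho p (p ^ K) n (g.1 *ᵥ (R r).1, (R r).2)) := by
  have hs : Function.Surjective (fun b => (g.1)ᵀ *ᵥ b) := by
    intro b
    refine ⟨((g⁻¹).1)ᵀ *ᵥ b, ?_⟩
    simp only
    rw [mulVec_mulVec, ← transpose_mul, ← Units.val_mul, inv_mul_cancel]
    simp
  have := h.map' (LinearMap.funLeft (ZMod p) (ZMod p) (fun b => (g.1)ᵀ *ᵥ b))
    (LinearMap.ker_eq_bot.mpr (LinearMap.funLeft_injective_of_surjective _ _ _ hs))
  have e0 : (⇑(LinearMap.funLeft (ZMod p) (ZMod p) fun b => (g.1)ᵀ *ᵥ b) ∘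
      fun r => rho p (p ^ K) n (R r)) = fun r => rho p (p ^ K) n (g.1 *ᵥ (R r).1, (R r).2) := by
    funext r b
    simp only [Function.comp, LinearMap.funLeft_apply, rho]
    have e : ∑ i, (g.1 *ᵥ (R r).1) i * b i = ∑ i, (R r).1 i * ((g.1)ᵀ *ᵥ b) i := by
      change (g.1 *ᵥ (R r).1) ⬝ᵥ b = (R r).1 ⬝ᵥ ((g.1)ᵀ *ᵥ b)
      rw [dotProduct_mulVec, vecMul_transpose]
    rw [e]
  rw [e0] at this
  exact this

lemma finrank_lower' {p : ℕ} [Fact p.Prime] (n K L M s : ℕ) (hn : 1 ≤ n) (hK : 1 ≤ K) (hMq : M ≤ p ^ K)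
    (hML : M ≤ p ^ L) (hL : 1 ≤ L) (hs : ∀ x < s, L * x < M) :
    (sx n s).card ≤ Module.finrank (ZMod p) (Submodule.span (ZMod p)
      (rho p (p ^ K) n '' {r | (∃ i, IsUnit (r.1 i)) ∧ r.2 < M})) := by
  obtain ⟨m, rfl⟩ : ∃ m, n = m + 1 := ⟨n - 1, by omega⟩
  exact finrank_lower m K L M s hK hMq hML hL hs

open Matrix in
lemma main_nat {p : ℕ} [Fact p.Prime] (k n L : ℕ) (hn : 1 ≤ n) (hk : 1 ≤ k) (hL : 1 ≤ L) [NeZero (p ^ k)]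
    (P : Finset (Fin n → ZMod (p ^ k))) (hP : IsProjRepSet (p ^ k) n P)
    (f : (Fin n → ZMod (p ^ k)) → ℕ) (hM : n * P.sup (fstar f) ≤ p ^ L) :
    ∑ u ∈ P, (fstar f u) ^ n ≤ P.card * ((2 * L) ^ n * ∑ x, (f x) ^ n) := by
  classical
  have hp : p.Prime := Fact.out
  set K := k + L with hKdef
  have hK : 1 ≤ K := by omega
  have hdvd : p ^ k ∣ p ^ K := pow_dvd_pow p (by omega)
  have hLK : p ^ L ≤ p ^ K := Nat.pow_le_pow_right hp.pos (by omega)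
  have : NeZero (p ^ K) := ⟨pow_ne_zero _ hp.ne_zero⟩
  have : Fintype (GL (Fin n) (ZMod (p ^ K))) := Fintype.ofFinite _
  obtain ⟨B, hB, hBS, hBM⟩ := greedy (F := ZMod p) (rho p (p ^ K) n)
    (fun v => ∃ i, IsUnit (v i)) (n * P.sup (fstar f))
  set Cn := ∑ x, (sx n (n * f x)).card with hCn
  have step1 : ∀ g : GL (Fin n) (ZMod (p ^ K)),
      (∑ r ∈ B, if r.2 < n * fstar f (redv hdvd (g.1 *ᵥ r.1)) then 1 else 0) ≤ Cn := by
    intro g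
    rw [← Finset.card_filter]
    set S := B.filter (fun r => r.2 < n * fstar f (redv hdvd (g.1 *ᵥ r.1))) with hS
    have hSB : S ⊆ B := Finset.filter_subset _ _
    have hli : LinearIndependent (ZMod p) (fun r : S => rho p (p ^ K) n r.1) :=
      hB.mono (Finset.coe_subset.mpr hSB)
    have hli2 := rho_gl K n g (fun r : S => r.1) hli
    have := rows_le_conds k K n hk hdvd (fun x => n * f x)
      (fun r : S => (g.1 *ᵥ r.1.1, r.1.2)) hli2 (fun r => ?_) (fun r => ?_)
    · simpa using this
    · have := (hBS r.1 (hSB r.2)).2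
      simp only
      omega
    · have hr := (Finset.mem_filter.mp r.2).2
      obtain ⟨a, -, ha⟩ := Finset.exists_mem_eq_sup (Finset.univ : Finset (Fin n → ZMod (p ^ k)))
        Finset.univ_nonempty (fun a => ∑ t : ZMod (p ^ k), f (a + t • redv hdvd (g.1 *ᵥ r.1.1)))
      refine ⟨a, ?_⟩
      rw [fstar, ha, Finset.mul_sum] at hr
      exact hr
  have step2 : P.card * ∑ g : GL (Fin n) (ZMod (p ^ K)),
      (∑ r ∈ B, if r.2 < n * fstar f (redv hdvd (g.1 *ᵥ r.1)) then 1 else 0) =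
      Fintype.card (GL (Fin n) (ZMod (p ^ K))) * ∑ u ∈ P, (B.filter (fun r => r.2 < n * fstar f u)).card := by
    simp_rw [Finset.card_filter]
    rw [Finset.sum_comm, Finset.sum_comm (s := P), Finset.mul_sum, Finset.mul_sum]
    apply Finset.sum_congr rfl
    intro r hr
    exact avg_gl k K n hk hK hdvd P hP (fun x => if r.2 < n * fstar f x then 1 else 0)
      (fun c w => by simp only [fstar_smul]) r.1 (hBS r hr).1
  have step3 : Fintype.card (GL (Fin n) (ZMod (p ^ K))) *
      ∑ u ∈ P, (B.filter (fun r => r.2 < n * fstar f u)).card ≤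
      Fintype.card (GL (Fin n) (ZMod (p ^ K))) * (P.card * Cn) := by
    rw [← step2]
    calc _ ≤ P.card * ∑ g : GL (Fin n) (ZMod (p ^ K)), Cn :=
          Nat.mul_le_mul_left _ (Finset.sum_le_sum fun g _ => step1 g)
      _ = _ := by rw [Finset.sum_const, Finset.card_univ, smul_eq_mul]; ring
  have step4 := Nat.le_of_mul_le_mul_left step3 Fintype.card_pos
  have step5 : ∀ u ∈ P, (n * fstar f u) ^ n ≤
      L ^ n * (n.factorial * (B.filter (fun r => r.2 < n * fstar f u)).card) := by
    intro u hu
    have hle : n * fstar f u ≤ n * P.sup (fstar f) := Nat.mul_le_mul_left _ (Finset.le_sup hu)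
    set M := n * fstar f u with hMdef
    set s := (M + (L - 1)) / L with hs
    have h1 : (sx n s).card ≤ _ := finrank_lower' (p := p) n K L M s hn hK (by omega) (by omega) hL (by
      intro x hx
      have : (x + 1) * L ≤ M + (L - 1) := (Nat.le_div_iff_mul_le (by omega)).mp hx
      have e : (x + 1) * L = L * x + L := by ring
      omega)
    have h2 := hBM M hle
    have h3 := card_sx_lower n s (by omega)
    have h4 : M ≤ L * s := by
      have := Nat.div_add_mod (M + (L - 1)) L
      have := Nat.mod_lt (M + (L - 1)) (by omega : L > 0)
      rw [← hs] at *
      omega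
    calc M ^ n ≤ (L * s) ^ n := Nat.pow_le_pow_left h4 n
      _ = L ^ n * s ^ n := mul_pow _ _ _
      _ ≤ L ^ n * (n.factorial * (B.filter (fun r => r.2 < M)).card) := by
        apply Nat.mul_le_mul_left
        refine h3.trans ?_
        rw [mul_comm]
        exact Nat.mul_le_mul_left _ (h1.trans h2)
  have step6 : n ^ n * ∑ u ∈ P, (fstar f u) ^ n ≤
      n ^ n * (P.card * ((2 * L) ^ n * ∑ x, (f x) ^ n)) := by
    calc n ^ n * ∑ u ∈ P, (fstar f u) ^ n = ∑ u ∈ P, (n * fstar f u) ^ n := by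
          rw [Finset.mul_sum]; simp_rw [mul_pow]
      _ ≤ ∑ u ∈ P, L ^ n * (n.factorial * (B.filter (fun r => r.2 < n * fstar f u)).card) :=
          Finset.sum_le_sum step5
      _ = L ^ n * (n.factorial * ∑ u ∈ P, (B.filter (fun r => r.2 < n * fstar f u)).card) := by
          rw [Finset.mul_sum, Finset.mul_sum]
      _ ≤ L ^ n * (n.factorial * (P.card * Cn)) := by gcongr
      _ = L ^ n * (P.card * ∑ x, (sx n (n * f x)).card * n.factorial) := by
          rw [← Finset.sum_mul]; ring
      _ ≤ L ^ n * (P.card * ∑ x, (2 * n * f x) ^ n) := by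
          gcongr with x _
          exact card_sx_upper n (f x) (by omega)
      _ = _ := by
          simp_rw [mul_pow]
          rw [← Finset.mul_sum]; ring
  exact Nat.le_of_mul_le_mul_left step6 (pow_pos (by omega) _)

theorem stmt2 (n p k : ℕ) (hn : 1 ≤ n) (hp : p.Prime) (hk : 1 ≤ k)
    (N : ℕ) [NeZero N] (hN : N = p ^ k)
    (P : Finset (Fin n → ZMod N)) (hP : IsProjRepSet N n P)
    (f : (Fin n → ZMod N) → ℕ) (hf : ∃ x, f x ≠ 0) :
    (∑ x : Fin n → ZMod N, (f x : ℝ) ^ n) ≥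
      (1 / (2 * ((⌈(Real.log ((P.sup (fstar f) : ℕ) : ℝ) + Real.log n) / Real.log p⌉ : ℤ) : ℝ)) ^ n) *
      (P.card : ℝ)⁻¹ * ∑ u ∈ P, (fstar f u : ℝ) ^ n := by
  subst hN
  have : Fact p.Prime := ⟨hp⟩
  obtain ⟨m, rfl⟩ : ∃ m, n = m + 1 := ⟨n - 1, by omega⟩
  set Mx := P.sup (fstar f) with hMx
  have hlogp : 0 < Real.log p := Real.log_pos (by exact_mod_cast hp.one_lt)
  set x : ℝ := (Real.log (Mx : ℝ) + Real.log ((m + 1 : ℕ) : ℝ)) / Real.log p with hx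
  have hx0 : 0 ≤ x := div_nonneg (add_nonneg (Real.log_natCast_nonneg _) (Real.log_natCast_nonneg _)) hlogp.le
  have hc0 : 0 ≤ ⌈x⌉ := Int.ceil_nonneg hx0
  obtain ⟨L, hL⟩ := Int.eq_ofNat_of_zero_le hc0
  have hcast : ((⌈x⌉ : ℤ) : ℝ) = (L : ℝ) := by rw [hL]; simp
  rw [hcast]
  rcases Nat.eq_zero_or_pos L with rfl | hLpos
  · simp only [Nat.cast_zero, mul_zero, zero_pow (Nat.succ_ne_zero m), div_zero, zero_mul]
    exact Finset.sum_nonneg fun x _ => by positivity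
  have hM : (m + 1) * Mx ≤ p ^ L := by
    rcases Nat.eq_zero_or_pos Mx with h0 | hpos
    · rw [h0]; simp
    have h1 : x ≤ (L : ℝ) := hcast ▸ Int.le_ceil x
    rw [hx, div_le_iff₀ hlogp, ← Real.log_mul (by exact_mod_cast hpos.ne') (by positivity), ← Real.log_pow,
      Real.log_le_log_iff (by positivity) (pow_pos (by exact_mod_cast hp.pos) _)] at h1
    rw [mul_comm]
    exact_mod_cast h1
  have key := main_nat k (m+1) L (by omega) hk hLpos P hP f hM
  have key' : (∑ u ∈ P, (fstar f u : ℝ) ^ (m+1)) ≤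
      (P.card : ℝ) * ((2 * (L : ℝ)) ^ (m+1) * ∑ x, (f x : ℝ) ^ (m+1)) := by exact_mod_cast key
  have hL' : (0 : ℝ) < (2 * (L : ℝ)) ^ (m+1) := by positivity
  rcases Nat.eq_zero_or_pos P.card with h0 | hpos
  · rw [h0]
    simp only [Nat.cast_zero, inv_zero, mul_zero, zero_mul]
    exact Finset.sum_nonneg fun x _ => by positivity
  have hPpos : (0 : ℝ) < P.card := by exact_mod_cast hpos
  rw [ge_iff_le, one_div, ← mul_inv, inv_mul_le_iff₀ (by positivity)]
  linarith
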